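/- arXiv:1702.00078 — 2 statements merged into one kernel-verified Lean document; each statement's English description precedes it below -/
import Mathlib

section
/- Fix a bipartite Bell scenario with n Alice inputs, m Bob inputs, and binary outputs, and a Bell expression β(p) = Σ c(a,b,x,y)·p(a,b|x,y). Let β^max be the maximum of β over all bipartite no-signaling boxes, let β₁^max be the maximum of β over all bipartite no-signaling boxes for which Bob's observable B₁ (input y = 1) is deterministic (i.e. Bob's marginal distribution at y = 1 is a point mass), and set w = β^max − β₁^max (the relevance of B₁). Then for every tripartite no-signaling box p̃(a,b,g|x,y) in which Grace has a single input and a binary output, β(p̃_AB) + w·⟨B₁ᵍB₁⟩ ≤ β^max, where p̃_AB is the Alice–Bob marginal of p̃ and ⟨B₁ᵍB₁⟩ = Σ_{b,g} b·g·p̃(b,g|y=1) is the correlator between Grace's output and Bob's output at input y = 1 (outputs valued in {−1,+1}). -/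
open Finset

/-- The sign `±1` associated with a binary output. -/
def sgn (b : Bool) : ℝ := if b then 1 else -1

/-- A bipartite no-signaling box with binary outputs. -/
def IsNSBox {n m : ℕ} (p : Bool → Bool → Fin n → Fin m → ℝ) : Prop :=
  (∀ a b x y, 0 ≤ p a b x y) ∧
  (∀ x y, ∑ a, ∑ b, p a b x y = 1) ∧
  (∀ a x y y', ∑ b, p a b x y = ∑ b, p a b x y') ∧
  (∀ b y x x', ∑ a, p a b x y = ∑ a, p a b x' y)

/-- A tripartite no-signaling box in which Grace holds a single fixed input. -/
def IsNS3Box {n m : ℕ} (p : Bool → Bool → Bool → Fin n → Fin m → ℝ) : Prop :=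
  (∀ a b g x y, 0 ≤ p a b g x y) ∧
  (∀ x y, ∑ a, ∑ b, ∑ g, p a b g x y = 1) ∧
  (∀ a g x y y', ∑ b, p a b g x y = ∑ b, p a b g x y') ∧
  (∀ b g y x x', ∑ a, p a b g x y = ∑ a, p a b g x' y)

/-- The Bell value `β(p) = Σ c(a,b,x,y)·p(a,b|x,y)` of a bipartite box. -/
def bell {n m : ℕ} (c : Bool → Bool → Fin n → Fin m → ℝ)
    (p : Bool → Bool → Fin n → Fin m → ℝ) : ℝ :=
  ∑ x, ∑ y, ∑ a, ∑ b, c a b x y * p a b x y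

/-- Bob's observable `B₁` (input `y = 1`, i.e. `0 : Fin m`) is deterministic:
his marginal at that input is a point mass. -/
def DetB1 {n m : ℕ} [NeZero m] (p : Bool → Bool → Fin n → Fin m → ℝ) : Prop :=
  ∃ b0 : Bool, ∀ x b, (∑ a, p a b x 0) = if b = b0 then 1 else 0

/-- The correlator `⟨B₁ᵍ B₁⟩` between Grace's output and Bob's output at Bob's input `y = 1`. -/
def corrBG {n m : ℕ} [NeZero n] [NeZero m]
    (p : Bool → Bool → Bool → Fin n → Fin m → ℝ) : ℝ :=
  ∑ b, ∑ g, sgn b * sgn g * (∑ a, p a b g 0 0)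

/-!
A no-signaling box is a family of `2 × 2` tables, one for each pair of inputs, whose row sums depend
only on Alice's input and whose column sums depend only on Bob's. If `f` and `id - f` are monotone
and `f 0 = 0`, each table contains a smaller table whose row and column sums are the images under
`f` of the original ones; these smaller tables again form an (unnormalized) no-signaling box.

Let `lo ≤ hi` be the probabilities of the two outcomes of `B₁`, and let `f u` be the length of
`[lo, hi] ∩ (-∞, u]`. Then `f lo = 0`, so the smaller box has a deterministic `B₁`, and its weight
is `hi - lo = |⟨B₁⟩|`. Bounding the Bell value of this part with `β₁^max` and that of the remainder
with `β^max` gives `β(p) + w·|⟨B₁⟩| ≤ β^max`. The monogamy relation is the sum of these bounds over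
the boxes that Alice and Bob share conditionally on Grace's output.
-/

section Tables

variable {f : ℝ → ℝ}

lemma apply_le_apply_add (hf : Monotone f) (hf' : Monotone fun u => u - f u) {u v w : ℝ}
    (hw : 0 ≤ w) (h : u ≤ v + w) : f u ≤ f v + w := by
  have hmono : f u ≤ f (v + w) := hf h
  have hlip : v - f v ≤ v + w - f (v + w) := hf' (le_add_of_nonneg_right hw)
  linarith

/- The cut condition for a flow from rows to columns with supplies `f (row sum)`, demands
`f (column sum)` and capacities `p a b`. -/
lemma apply_row_sum_le (hf : Monotone f) (hf' : Monotone fun u => u - f u)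
    {p : Bool → Bool → ℝ} (hp : ∀ a b, 0 ≤ p a b) (a b : Bool) :
    f (∑ b', p a b') ≤ f (∑ a', p a' b) + p a (!b) := by
  refine apply_le_apply_add hf hf' (hp a !b) ?_
  have hcorner := hp (!a) b
  cases a <;> cases b <;>
    simp only [Fintype.sum_bool, Bool.not_true, Bool.not_false] at hcorner ⊢ <;> linarith

lemma exists_table_le_of_monotone (hf : Monotone f) (hf' : Monotone fun u => u - f u)
    (hf0 : f 0 = 0) {p : Bool → Bool → ℝ} (hp : ∀ a b, 0 ≤ p a b)
    (htotal : ∑ a, f (∑ b, p a b) = ∑ b, f (∑ a, p a b)) :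
    ∃ q : Bool → Bool → ℝ, (∀ a b, 0 ≤ q a b) ∧ (∀ a b, q a b ≤ p a b) ∧
      (∀ a, ∑ b, q a b = f (∑ b, p a b)) ∧ ∀ b, ∑ a, q a b = f (∑ a, p a b) := by
  have row_nonneg a : 0 ≤ f (∑ b, p a b) := hf0 ▸ hf (sum_nonneg fun b _ => hp a b)
  have col_nonneg b : 0 ≤ f (∑ a, p a b) := hf0 ▸ hf (sum_nonneg fun a _ => hp a b)
  have apply_le_self {u : ℝ} (hu : 0 ≤ u) : f u ≤ u := by
    simpa [hf0] using apply_le_apply_add hf hf' (v := 0) hu (by simp)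
  have row_le a : f (∑ b, p a b) ≤ ∑ b, p a b := apply_le_self (sum_nonneg fun b _ => hp a b)
  have col_le b : f (∑ a, p a b) ≤ ∑ a, p a b := apply_le_self (sum_nonneg fun a _ => hp a b)
  have row_le_col := apply_row_sum_le hf hf' hp
  have col_le_row b a := apply_row_sum_le hf hf' (p := fun b a => p a b) (fun b a => hp a b) b a
  simp only [Fintype.sum_bool, Bool.forall_bool, Bool.not_true, Bool.not_false] at *
  set R₀ := f (p false true + p false false)
  set R₁ := f (p true true + p true false)
  set C₀ := f (p true false + p false false)
  set C₁ := f (p true true + p false true)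
  -- The bounds that `0 ≤ q a b ≤ p a b` and the prescribed margins impose on `s = q true true`.
  obtain ⟨s, hlower, hupper⟩ : ∃ s,
      max (max 0 (R₁ - C₀)) (max (R₁ - p true false) (C₁ - p false true)) ≤ s ∧
      s ≤ min (min R₁ C₁) (min (p true true) (p false false + R₁ - C₀)) := by
    refine ⟨_, le_rfl, ?_⟩
    simp only [max_le_iff, le_min_iff]
    and_intros <;> linarith
  simp only [max_le_iff, le_min_iff] at hlower hupper
  let q : Bool → Bool → ℝ
    | true, true => s
    | true, false => R₁ - s
    | false, true => C₁ - s
    | false, false => C₀ - R₁ + s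
  refine ⟨q, ?_, ?_, ?_, ?_⟩ <;> dsimp only [q] <;> grind

end Tables

section OverlapLength

/-- The length of `[lo, hi] ∩ (-∞, u]`, for `lo ≤ hi`. It serves to extract from a box the part in
which an observable with outcome probabilities `lo` and `hi` is deterministic. -/
noncomputable def overlapLength (lo hi u : ℝ) : ℝ := max lo (min hi u) - lo

lemma overlapLength_monotone (lo hi : ℝ) : Monotone (overlapLength lo hi) :=
  fun _ _ h => sub_le_sub_right (max_le_max le_rfl (min_le_min le_rfl h)) lo

lemma overlapLength_of_le {lo hi u : ℝ} (h : u ≤ lo) : overlapLength lo hi u = 0 := by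
  rw [overlapLength, max_eq_left (min_le_of_right_le h), sub_self]

lemma sub_overlapLength_monotone (lo hi : ℝ) : Monotone fun u => u - overlapLength lo hi u := by
  intro u v h
  dsimp only [overlapLength]
  grind

lemma overlapLength_add_reflect {lo hi : ℝ} (h : lo ≤ hi) (u : ℝ) :
    overlapLength lo hi u + overlapLength lo hi (lo + hi - u) = hi - lo := by
  unfold overlapLength
  grind

end OverlapLength

section Boxes

variable {n m : ℕ} {p : Bool → Bool → Fin n → Fin m → ℝ}

/-- The Bell expression with coefficients `c` as a linear functional on families `p(a,b|x,y)`. -/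
def bellLinear (c : Bool → Bool → Fin n → Fin m → ℝ) :
    (Bool → Bool → Fin n → Fin m → ℝ) →ₗ[ℝ] ℝ where
  toFun := bell c
  map_add' p q := by simp only [bell, Pi.add_apply, mul_add, sum_add_distrib]
  map_smul' k p := by
    simp only [bell, Pi.smul_apply, smul_eq_mul, RingHom.id_apply, mul_sum, mul_left_comm]

lemma bell_smul (c p : Bool → Bool → Fin n → Fin m → ℝ) (k : ℝ) :
    bell c (k • p) = k * bell c p :=
  (bellLinear c).map_smul k p

lemma bell_add (c p q : Bool → Bool → Fin n → Fin m → ℝ) :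
    bell c (p + q) = bell c p + bell c q :=
  (bellLinear c).map_add p q

lemma bell_sum {G : Type*} [Fintype G] (c : Bool → Bool → Fin n → Fin m → ℝ)
    (p : Bool → Bool → G → Fin n → Fin m → ℝ) :
    bell c (fun a b x y => ∑ g, p a b g x y) = ∑ g, bell c (fun a b => p a b g) := by
  have hsum : (fun a b x y => ∑ g, p a b g x y) = ∑ g, fun a b => p a b g := by
    ext a b x y
    simp only [Finset.sum_apply]
  rw [hsum]
  exact map_sum (bellLinear c) _ _

/-- A bipartite no-signaling box without the normalization condition, such as the joint
probabilities `p̃(a,b,g|x,y)` for a fixed output `g` of Grace. -/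
structure IsUnnormalizedNSBox (p : Bool → Bool → Fin n → Fin m → ℝ) : Prop where
  nonneg : ∀ a b x y, 0 ≤ p a b x y
  alice_marginal_eq : ∀ a x y y', ∑ b, p a b x y = ∑ b, p a b x y'
  bob_marginal_eq : ∀ b y x x', ∑ a, p a b x y = ∑ a, p a b x' y

lemma IsUnnormalizedNSBox.smul (hp : IsUnnormalizedNSBox p) {k : ℝ} (hk : 0 ≤ k) :
    IsUnnormalizedNSBox (k • p) where
  nonneg a b x y := mul_nonneg hk (hp.nonneg a b x y)
  alice_marginal_eq a x y y' := by
    simp only [Pi.smul_apply, ← smul_sum, hp.alice_marginal_eq a x y y']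
  bob_marginal_eq b y x x' := by
    simp only [Pi.smul_apply, ← smul_sum, hp.bob_marginal_eq b y x x']

lemma IsUnnormalizedNSBox.exists_le_of_monotone (hp : IsUnnormalizedNSBox p) {f : ℝ → ℝ}
    (hf : Monotone f) (hf' : Monotone fun u => u - f u) (hf0 : f 0 = 0)
    (htotal : ∀ x y, ∑ a, f (∑ b, p a b x y) = ∑ b, f (∑ a, p a b x y)) :
    ∃ q, IsUnnormalizedNSBox q ∧ IsUnnormalizedNSBox (p - q) ∧
      ∀ b x y, ∑ a, q a b x y = f (∑ a, p a b x y) := by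
  choose q q_nonneg q_le q_row q_col using fun x y =>
    exists_table_le_of_monotone hf hf' hf0 (fun a b => hp.nonneg a b x y) (htotal x y)
  have hq : IsUnnormalizedNSBox fun a b x y => q x y a b :=
    { nonneg := fun a b x y => q_nonneg x y a b
      alice_marginal_eq := fun a x y y' => by
        rw [q_row, q_row, hp.alice_marginal_eq a x y y']
      bob_marginal_eq := fun b y x x' => by
        rw [q_col, q_col, hp.bob_marginal_eq b y x x'] }
  refine ⟨_, hq, ⟨fun a b x y => sub_nonneg.2 (q_le x y a b), fun a x y y' => ?_,
    fun b y x x' => ?_⟩, fun b x y => q_col x y b⟩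
  · simp only [Pi.sub_apply, sum_sub_distrib, hp.alice_marginal_eq a x y y',
      hq.alice_marginal_eq a x y y']
  · simp only [Pi.sub_apply, sum_sub_distrib, hp.bob_marginal_eq b y x x',
      hq.bob_marginal_eq b y x x']

variable [NeZero n] [NeZero m]

/-- The probability of the outcome `b` of `B₁`, evaluated at Alice's first input. -/
def probB1 (p : Bool → Bool → Fin n → Fin m → ℝ) (b : Bool) : ℝ := ∑ a, p a b 0 0

/-- The expectation `⟨B₁⟩`, not divided by the weight of the box. -/
def meanB1 (p : Bool → Bool → Fin n → Fin m → ℝ) : ℝ := ∑ b, sgn b * probB1 p b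

/-- The total weight of an unnormalized box, evaluated at input `y = 1` of Bob and Alice's first
input; it is `1` for a normalized box. -/
def weight (p : Bool → Bool → Fin n → Fin m → ℝ) : ℝ := ∑ b, probB1 p b

lemma weight_smul (k : ℝ) (p : Bool → Bool → Fin n → Fin m → ℝ) :
    weight (k • p) = k * weight p := by
  simp only [weight, probB1, Pi.smul_apply, smul_eq_mul, mul_sum]

lemma weight_sub (p q : Bool → Bool → Fin n → Fin m → ℝ) :
    weight (p - q) = weight p - weight q := by
  simp only [weight, probB1, Pi.sub_apply, sum_sub_distrib]

lemma abs_meanB1_eq_sub {b : Bool} (h : probB1 p (!b) ≤ probB1 p b) :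
    |meanB1 p| = probB1 p b - probB1 p (!b) := by
  cases b <;> simp only [meanB1, sgn, Fintype.sum_bool, Bool.not_true, Bool.not_false] at * <;>
    grind

namespace IsUnnormalizedNSBox

lemma probB1_nonneg (hp : IsUnnormalizedNSBox p) (b : Bool) : 0 ≤ probB1 p b :=
  sum_nonneg fun a _ => hp.nonneg a b 0 0

lemma weight_nonneg (hp : IsUnnormalizedNSBox p) : 0 ≤ weight p :=
  sum_nonneg fun b _ => hp.probB1_nonneg b

lemma sum_eq_weight (hp : IsUnnormalizedNSBox p) (x : Fin n) (y : Fin m) :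
    ∑ a, ∑ b, p a b x y = weight p := by
  calc ∑ a, ∑ b, p a b x y
      = ∑ a, ∑ b, p a b x 0 := sum_congr rfl fun a _ => hp.alice_marginal_eq a x y 0
    _ = ∑ b, ∑ a, p a b x 0 := sum_comm
    _ = ∑ b, ∑ a, p a b 0 0 := sum_congr rfl fun b _ => hp.bob_marginal_eq b 0 x 0

lemma isNSBox (hp : IsUnnormalizedNSBox p) (hw : weight p = 1) : IsNSBox p :=
  ⟨hp.nonneg, fun x y => (hp.sum_eq_weight x y).trans hw, hp.alice_marginal_eq,
    hp.bob_marginal_eq⟩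

lemma detB1 (hp : IsUnnormalizedNSBox p) (hw : weight p = 1) {b₀ : Bool}
    (h : probB1 p (!b₀) = 0) : DetB1 p := by
  refine ⟨b₀, fun x b => ?_⟩
  rw [hp.bob_marginal_eq b 0 x 0]
  change probB1 p b = _
  rw [weight, Fintype.sum_bool] at hw
  cases b₀ <;> cases b <;> simp_all

lemma eq_zero_of_weight_eq_zero (hp : IsUnnormalizedNSBox p) (hw : weight p = 0) : p = 0 := by
  ext a b x y
  have hsum : ∑ a, ∑ b, p a b x y = 0 := (hp.sum_eq_weight x y).trans hw
  have hrow := (sum_eq_zero_iff_of_nonneg fun a _ => sum_nonneg fun b _ => hp.nonneg a b x y).1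
    hsum a (mem_univ a)
  exact (sum_eq_zero_iff_of_nonneg fun b _ => hp.nonneg a b x y).1 hrow b (mem_univ b)

lemma bell_le_of_normalized {c : Bool → Bool → Fin n → Fin m → ℝ} {M : ℝ}
    (hp : IsUnnormalizedNSBox p)
    (h : IsUnnormalizedNSBox ((weight p)⁻¹ • p) → weight ((weight p)⁻¹ • p) = 1 →
      bell c ((weight p)⁻¹ • p) ≤ M) :
    bell c p ≤ weight p * M := by
  rcases hp.weight_nonneg.eq_or_lt with hw | hw
  · rw [← hw, zero_mul, hp.eq_zero_of_weight_eq_zero hw.symm]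
    exact (map_zero (bellLinear c)).le
  · have hbell := h (hp.smul (inv_nonneg.2 hw.le))
      (by rw [weight_smul, inv_mul_cancel₀ hw.ne'])
    rwa [bell_smul, inv_mul_le_iff₀ hw] at hbell

lemma bell_le_weight_mul {c : Bool → Bool → Fin n → Fin m → ℝ} {β : ℝ}
    (hβ : ∀ q, IsNSBox q → bell c q ≤ β) (hp : IsUnnormalizedNSBox p) :
    bell c p ≤ weight p * β :=
  hp.bell_le_of_normalized fun hq hw => hβ _ (hq.isNSBox hw)

lemma bell_le_weight_mul_of_probB1_eq_zero {c : Bool → Bool → Fin n → Fin m → ℝ} {β₁ : ℝ}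
    (hβ₁ : ∀ q, IsNSBox q → DetB1 q → bell c q ≤ β₁) (hp : IsUnnormalizedNSBox p) {b₀ : Bool}
    (h : probB1 p (!b₀) = 0) :
    bell c p ≤ weight p * β₁ := by
  refine hp.bell_le_of_normalized fun hq hw => hβ₁ _ (hq.isNSBox hw) (hq.detB1 hw (b₀ := b₀) ?_)
  simp only [probB1, Pi.smul_apply, ← smul_sum] at h ⊢
  rw [h, smul_zero]

lemma exists_deterministic_part (hp : IsUnnormalizedNSBox p) :
    ∃ q b₀, IsUnnormalizedNSBox q ∧ IsUnnormalizedNSBox (p - q) ∧ weight q = |meanB1 p| ∧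
      probB1 q (!b₀) = 0 := by
  obtain ⟨b₀, hb₀⟩ : ∃ b₀, probB1 p (!b₀) ≤ probB1 p b₀ :=
    (le_total (probB1 p false) (probB1 p true)).elim (⟨true, ·⟩) (⟨false, ·⟩)
  set lo := probB1 p (!b₀) with hlo
  set hi := probB1 p b₀ with hhi
  have weight_eq : weight p = lo + hi := by
    cases b₀ <;> simp [weight, hlo, hhi, add_comm]
  have total {r : Bool → ℝ} (hr : ∑ b, r b = lo + hi) :
      ∑ b, overlapLength lo hi (r b) = hi - lo := by
    rw [Fintype.sum_bool] at hr ⊢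
    rw [← overlapLength_add_reflect hb₀ (r true), ← hr, add_sub_cancel_left]
  have row_total x y : ∑ a, ∑ b, p a b x y = lo + hi := (hp.sum_eq_weight x y).trans weight_eq
  have col_total x y : ∑ b, ∑ a, p a b x y = lo + hi := sum_comm.trans (row_total x y)
  obtain ⟨q, hq, hpq, hmarginal⟩ := hp.exists_le_of_monotone (overlapLength_monotone lo hi)
    (sub_overlapLength_monotone lo hi) (overlapLength_of_le (hp.probB1_nonneg _))
    fun x y => (total (row_total x y)).trans (total (col_total x y)).symm
  have probB1_eq b : probB1 q b = overlapLength lo hi (probB1 p b) := hmarginal b 0 0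
  refine ⟨q, b₀, hq, hpq, ?_, ?_⟩
  · rw [abs_meanB1_eq_sub hb₀, weight]
    simp only [probB1_eq]
    exact total weight_eq
  · rw [probB1_eq, overlapLength_of_le le_rfl]

lemma bell_add_mul_abs_meanB1_le {c : Bool → Bool → Fin n → Fin m → ℝ} {β β₁ : ℝ}
    (hβ : ∀ q, IsNSBox q → bell c q ≤ β) (hβ₁ : ∀ q, IsNSBox q → DetB1 q → bell c q ≤ β₁)
    (hp : IsUnnormalizedNSBox p) :
    bell c p + (β - β₁) * |meanB1 p| ≤ weight p * β := by
  obtain ⟨q, b₀, hq, hpq, hweight, hzero⟩ := hp.exists_deterministic_part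
  have hdet : bell c q ≤ |meanB1 p| * β₁ :=
    hweight ▸ hq.bell_le_weight_mul_of_probB1_eq_zero hβ₁ hzero
  have hrest : bell c (p - q) ≤ (weight p - |meanB1 p|) * β := by
    simpa only [weight_sub, hweight] using hpq.bell_le_weight_mul hβ
  have hsplit : bell c p = bell c q + bell c (p - q) := by rw [← bell_add, add_sub_cancel]
  linarith

end IsUnnormalizedNSBox

end Boxes

section Tripartite

variable {n m : ℕ}

lemma IsNS3Box.isUnnormalizedNSBox {pt : Bool → Bool → Bool → Fin n → Fin m → ℝ}
    (hpt : IsNS3Box pt) (g : Bool) : IsUnnormalizedNSBox fun a b => pt a b g :=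
  ⟨fun a b => hpt.1 a b g, fun a => hpt.2.2.1 a g, fun b => hpt.2.2.2 b g⟩

variable [NeZero n] [NeZero m]

lemma IsNS3Box.sum_weight {pt : Bool → Bool → Bool → Fin n → Fin m → ℝ} (hpt : IsNS3Box pt) :
    ∑ g, weight (fun a b => pt a b g) = 1 := by
  rw [← hpt.2.1 0 0]
  simp only [weight, probB1, Fintype.sum_bool]
  ring

lemma corrBG_eq_sum_sgn_mul_meanB1 (pt : Bool → Bool → Bool → Fin n → Fin m → ℝ) :
    corrBG pt = ∑ g, sgn g * meanB1 (fun a b => pt a b g) := by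
  simp only [corrBG, meanB1, probB1, Fintype.sum_bool]
  ring

lemma abs_sgn (b : Bool) : |sgn b| = 1 := by
  cases b <;> simp [sgn]

theorem monogamy_relevance_general {G : Type*} [Fintype G]
    (c : Bool → Bool → Fin n → Fin m → ℝ) (βmax β1max : ℝ)
    (hmax : IsGreatest {v : ℝ | ∃ p, IsNSBox p ∧ v = bell c p} βmax)
    (h1max : IsGreatest {v : ℝ | ∃ p, IsNSBox p ∧ DetB1 p ∧ v = bell c p} β1max)
    (pt : Bool → Bool → G → Fin n → Fin m → ℝ)
    (hpt : ∀ g, IsUnnormalizedNSBox fun a b => pt a b g)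
    (hweight : ∑ g, weight (fun a b => pt a b g) = 1) {σ : G → ℝ} (hσ : ∀ g, |σ g| ≤ 1) :
    bell c (fun a b x y => ∑ g, pt a b g x y) +
      (βmax - β1max) * ∑ g, σ g * meanB1 (fun a b => pt a b g) ≤ βmax := by
  have relevance_nonneg : 0 ≤ βmax - β1max :=
    sub_nonneg.2 (h1max.mono hmax fun _ ⟨p, hp, _, hv⟩ => ⟨p, hp, hv⟩)
  have conditional_bound g := (hpt g).bell_add_mul_abs_meanB1_le
    (fun q hq => hmax.2 ⟨q, hq, rfl⟩) (fun q hq hdet => h1max.2 ⟨q, hq, hdet, rfl⟩)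
  have correlator_le g :
      σ g * meanB1 (fun a b => pt a b g) ≤ |meanB1 (fun a b => pt a b g)| :=
    calc _ ≤ |σ g| * |meanB1 (fun a b => pt a b g)| := (le_abs_self _).trans (abs_mul _ _).le
      _ ≤ _ := mul_le_of_le_one_left (abs_nonneg _) (hσ g)
  calc bell c (fun a b x y => ∑ g, pt a b g x y) +
        (βmax - β1max) * ∑ g, σ g * meanB1 (fun a b => pt a b g)
      ≤ ∑ g, (bell c (fun a b => pt a b g) +
          (βmax - β1max) * |meanB1 (fun a b => pt a b g)|) := by
        rw [bell_sum, mul_sum, ← sum_add_distrib]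
        gcongr with g
        exact correlator_le g
    _ ≤ ∑ g, weight (fun a b => pt a b g) * βmax := sum_le_sum fun g _ => conditional_bound g
    _ = βmax := by rw [← sum_mul, hweight, one_mul]

end Tripartite

/-- Monogamy relation with the relevance `w = β^max − β₁^max` of Bob's observable `B₁`:
for every tripartite no-signaling box `p̃` (Grace with a single input and a binary output),
`β(p̃_AB) + w·⟨B₁ᵍB₁⟩ ≤ β^max`. -/
theorem monogamy_relevance {n m : ℕ} [NeZero n] [NeZero m]
    (c : Bool → Bool → Fin n → Fin m → ℝ) (βmax β1max : ℝ)
    (hmax : IsGreatest {v : ℝ | ∃ p, IsNSBox p ∧ v = bell c p} βmax)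
    (h1max : IsGreatest {v : ℝ | ∃ p, IsNSBox p ∧ DetB1 p ∧ v = bell c p} β1max)
    (pt : Bool → Bool → Bool → Fin n → Fin m → ℝ) (hpt : IsNS3Box pt) :
    bell c (fun a b x y => ∑ g, pt a b g x y) + (βmax - β1max) * corrBG pt ≤ βmax := by
  rw [corrBG_eq_sum_sgn_mul_meanB1]
  exact monogamy_relevance_general c βmax β1max hmax h1max pt hpt.isUnnormalizedNSBox
    hpt.sum_weight fun g => (abs_sgn g).le
end

section
/- Let β(p) = Σ_{x=1}^{n} Σ_{y=1}^{m} c_{x,y}⟨A_xB_y⟩ be the Bell expression of a total-function XOR game, i.e. all coefficients satisfy c_{x,y} ∈ {−1,+1}, in a bipartite scenario with n Alice inputs, m Bob inputs, and binary ±1 outputs. Let β_cl^max be the maximum of β over deterministic (local) strategies, i.e. over sign assignments a : {1,…,n} → {−1,+1}, b : {1,…,m} → {−1,+1} of Σ_{x,y} c_{x,y} a_x b_y. Then the maximum of β over all no-signaling boxes in which Bob's observable B₁ is deterministic satisfies β₁^max ≤ max{n(m−1), β_cl^max}. Consequently, since the maximal no-signaling value is β^max = nm, the relevance of B₁ satisfies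 w ≥ min(n, nm − β_cl^max). -/
open Finset

/-- The correlator `⟨A_x B_y⟩` of a bipartite box with binary `±1` outputs. -/
def corr {n m : ℕ} (p : Bool → Bool → Fin n → Fin m → ℝ)
    (x : Fin n) (y : Fin m) : ℝ :=
  ∑ a, ∑ b, sgn a * sgn b * p a b x y

/-!
For a no-signaling box, `c ⟨A_x B_y⟩ ≤ 1 - |⟨A_x⟩ - c ⟨B_y⟩|` whenever `c = ±1`, so only the means
`E x = ⟨A_x⟩` and `F y = ⟨B_y⟩` matter. Let `δ` be the least `|F y|`, and split each distance
`|E x - c F y|` at the levels `±δ`. Within them every `F y` is seen as `±δ`, which contributes at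
most `δ` times the classical value. Outside them every entry contributes at most `1 - δ`, and some
pair of columns contributes only `1 - δ` to each row: one where `|F y| = δ`, so that nothing of
`F y` lies outside, and the deterministic one, where `|F y| = 1`. The value is thus at most
`δ β_cl + (1 - δ) n (m - 1)`, a convex combination of the two numbers in the maximum.
-/

section Clip

variable {δ φ s : ℝ}

/-- The truncation of a real number to `[-δ, δ]`, that is, its part within the levels `±δ`.
It is meant for `0 ≤ δ`. -/
noncomputable def clip (δ u : ℝ) : ℝ := max (-δ) (min δ u)

lemma abs_clip_le (hδ : 0 ≤ δ) (u : ℝ) : |clip δ u| ≤ δ :=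
  abs_le.2 ⟨le_max_left _ _, max_le (by linarith) (min_le_left _ _)⟩

lemma clip_neg (hδ : 0 ≤ δ) (u : ℝ) : clip δ (-u) = -clip δ u := by
  simp only [clip, max_def, min_def]
  split_ifs <;> linarith

lemma abs_sub_eq_clip_add_abs (hδ : 0 ≤ δ) (hφ : δ ≤ φ) (u : ℝ) :
    |u - φ| = (δ - clip δ u) + |(u - clip δ u) - (φ - δ)| := by
  rcases le_total u δ with hu | hu
  · have hsub : u - clip δ u ≤ 0 := by
      simp only [clip, min_eq_right hu, sub_nonpos, le_max_right]
    have hφu : u - φ ≤ 0 := by linarith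
    have houter : (u - clip δ u) - (φ - δ) ≤ 0 := by linarith
    rw [abs_of_nonpos hφu, abs_of_nonpos houter]
    ring
  · have hclip : clip δ u = δ := by
      rw [clip, min_eq_left hu, max_eq_right (by linarith)]
    rw [hclip]
    ring_nf

lemma abs_sub_sign_mul_eq_clip_add_abs (hδ : 0 ≤ δ) (hφ : δ ≤ φ) (hs : s = 1 ∨ s = -1) (u : ℝ) :
    |u - s * φ| = (δ - clip δ u * s) + |s * (u - clip δ u) - (φ - δ)| := by
  rcases hs with rfl | rfl
  · simpa only [one_mul, mul_one] using abs_sub_eq_clip_add_abs hδ hφ u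
  · rw [← abs_neg (u - -1 * φ)]
    convert abs_sub_eq_clip_add_abs hδ hφ (-u) using 2
    · ring
    · rw [clip_neg hδ]; ring
    · rw [clip_neg hδ]; ring_nf

end Clip

section UnitSign

/-- The sign of a real number as one of `±1`, with value `1` at `0`, so that it can serve as a
deterministic output. -/
noncomputable def unitSign (u : ℝ) : ℝ := if 0 ≤ u then 1 else -1

lemma unitSign_eq_one_or_neg_one (u : ℝ) : unitSign u = 1 ∨ unitSign u = -1 :=
  ite_eq_or_eq _ _ _

lemma unitSign_mul_self (u : ℝ) : unitSign u * u = |u| := by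
  unfold unitSign
  split_ifs with hu
  · rw [one_mul, abs_of_nonneg hu]
  · rw [neg_one_mul, abs_of_neg (not_le.1 hu)]

lemma unitSign_mul_abs (u : ℝ) : unitSign u * |u| = u := by
  rw [← unitSign_mul_self, ← mul_assoc]
  rcases unitSign_eq_one_or_neg_one u with h | h <;> simp [h]

lemma mul_eq_one_or_neg_one {s t : ℝ} (hs : s = 1 ∨ s = -1) (ht : t = 1 ∨ t = -1) :
    s * t = 1 ∨ s * t = -1 := by
  rcases hs with rfl | rfl <;> rcases ht with rfl | rfl <;> norm_num

end UnitSign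

lemma sum_le_card_sub_one_mul {ι : Type*} [Fintype ι] {f : ι → ℝ} {K : ℝ} (hf : ∀ i, f i ≤ K)
    {i j : ι} (hij : i ≠ j) (hpair : f i + f j ≤ K) :
    ∑ k, f k ≤ (Fintype.card ι - 1) * K := by
  classical
  have hdefect : ∑ k ∈ {i, j}, (K - f k) ≤ ∑ k, (K - f k) :=
    sum_le_sum_of_subset_of_nonneg (subset_univ _) fun k _ _ => sub_nonneg.2 (hf k)
  rw [sum_pair hij, sum_sub_distrib, sum_const, card_univ, nsmul_eq_mul] at hdefect
  linarith

section XorGame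

variable {X Y : Type*} [Fintype X] [Fintype Y] {c : X → Y → ℝ} {β : ℝ}

/-- `β` bounds the value of every deterministic local strategy for the XOR game `c`,
that is, `β_cl^max ≤ β`. -/
def IsLocalBound (c : X → Y → ℝ) (β : ℝ) : Prop :=
  ∀ (a : X → ℝ) (b : Y → ℝ), (∀ x, a x = 1 ∨ a x = -1) → (∀ y, b y = 1 ∨ b y = -1) →
    ∑ x, ∑ y, c x y * a x * b y ≤ β

lemma IsLocalBound.sum_abs_sum_mul_le (hβ : IsLocalBound c β) {b : Y → ℝ}
    (hb : ∀ y, b y = 1 ∨ b y = -1) : ∑ x, |∑ y, c x y * b y| ≤ β := by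
  refine le_trans (le_of_eq (sum_congr rfl fun x _ => ?_))
    (hβ (fun x => unitSign (∑ y, c x y * b y)) b (fun x => unitSign_eq_one_or_neg_one _) hb)
  rw [← unitSign_mul_self, mul_sum]
  exact sum_congr rfl fun y _ => by ring

lemma sum_one_sub_abs_sub_sign_mul_le {s φ : Y → ℝ} {δ : ℝ} {y₀ y₁ : Y}
    (hs : ∀ y, s y = 1 ∨ s y = -1) (hδ : 0 ≤ δ) (hφ : ∀ y, δ ≤ φ y)
    (h₀ : φ y₀ = 1) (h₁ : φ y₁ = δ) (e : ℝ) :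
    ∑ y, (1 - |e - s y * φ y|) ≤
      δ * |∑ y, s y| + (Fintype.card Y - 1) * (1 - δ) := by
  set k := clip δ e
  -- What is left of `1 - |e - s y * φ y|` after its share `k * s y` from within `±δ` is removed.
  set r : Y → ℝ := fun y => (1 - δ) - |s y * (e - k) - (φ y - δ)|
  have hsplit : ∑ y, (1 - |e - s y * φ y|) = k * ∑ y, s y + ∑ y, r y := by
    rw [mul_sum, ← sum_add_distrib]
    refine sum_congr rfl fun y _ => ?_
    rw [abs_sub_sign_mul_eq_clip_add_abs hδ (hφ y) (hs y)]
    ring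
  have hinner : k * ∑ y, s y ≤ δ * |∑ y, s y| :=
    (le_abs_self _).trans <| (abs_mul _ _).trans_le <|
      mul_le_mul_of_nonneg_right (abs_clip_le hδ e) (abs_nonneg _)
  have hr : ∀ y, r y ≤ 1 - δ := fun y => sub_le_self _ (abs_nonneg _)
  have houter : ∑ y, r y ≤ (Fintype.card Y - 1) * (1 - δ) := by
    rcases eq_or_ne y₀ y₁ with rfl | hne
    · obtain rfl : δ = 1 := h₁.symm.trans h₀
      simpa using sum_nonpos fun y _ => (hr y).trans_eq (sub_self 1)
    · refine sum_le_card_sub_one_mul hr hne ?_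
      have habs : ∀ y, |s y * (e - k)| = |e - k| := fun y => by
        rcases hs y with h | h <;> simp [h, abs_sub_comm]
      have hr₀ : r y₀ ≤ |e - k| := by
        have htri := abs_sub_abs_le_abs_sub (1 - δ) (s y₀ * (e - k))
        rw [habs, abs_sub_comm _ (s y₀ * (e - k))] at htri
        simp only [r, h₀]
        linarith [le_abs_self (1 - δ)]
      have hr₁ : r y₁ = (1 - δ) - |e - k| := by
        simp only [r, h₁, sub_self, sub_zero, habs]
      linarith
  linarith

lemma IsLocalBound.sum_one_sub_abs_sub_le_max (hβ : IsLocalBound c β)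
    (hc : ∀ x y, c x y = 1 ∨ c x y = -1) (E : X → ℝ) {F : Y → ℝ} {y₀ : Y} (hF : |F y₀| = 1) :
    ∑ x, ∑ y, (1 - |E x - c x y * F y|) ≤
      max ((Fintype.card X : ℝ) * (Fintype.card Y - 1)) β := by
  have : Nonempty Y := ⟨y₀⟩
  obtain ⟨y₁, hmin⟩ := Finite.exists_min fun y => |F y|
  set δ := |F y₁|
  have hδ : 0 ≤ δ := abs_nonneg _
  have hδ_le_one : δ ≤ 1 := (hmin y₀).trans_eq hF
  set b : Y → ℝ := fun y => unitSign (F y)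
  have hb : ∀ y, b y = 1 ∨ b y = -1 := fun y => unitSign_eq_one_or_neg_one _
  have hrow : ∀ x, ∑ y, (1 - |E x - c x y * F y|) ≤
      δ * |∑ y, c x y * b y| + (Fintype.card Y - 1) * (1 - δ) := fun x => by
    simpa only [b, mul_assoc, unitSign_mul_abs] using
      sum_one_sub_abs_sub_sign_mul_le (s := fun y => c x y * b y)
        (fun y => mul_eq_one_or_neg_one (hc x y) (hb y)) hδ hmin hF rfl (E x)
  calc ∑ x, ∑ y, (1 - |E x - c x y * F y|)
      ≤ ∑ x, (δ * |∑ y, c x y * b y| + (Fintype.card Y - 1) * (1 - δ)) :=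
        sum_le_sum fun x _ => hrow x
    _ = (1 - δ) * (Fintype.card X * (Fintype.card Y - 1)) + δ * ∑ x, |∑ y, c x y * b y| := by
        rw [sum_add_distrib, ← mul_sum, sum_const, card_univ, nsmul_eq_mul]
        ring
    _ ≤ (1 - δ) * (Fintype.card X * (Fintype.card Y - 1)) + δ * β := by
        gcongr
        exact hβ.sum_abs_sum_mul_le hb
    _ ≤ max ((Fintype.card X : ℝ) * (Fintype.card Y - 1)) β :=
        Convex.combo_le_max _ _ (sub_nonneg.2 hδ_le_one) hδ (sub_add_cancel 1 δ)

end XorGame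

section Box

variable {n m : ℕ} {p : Bool → Bool → Fin n → Fin m → ℝ}

/-- Alice's mean `⟨A_x⟩` when Bob's input is `y`; no-signaling makes it independent of `y`. -/
def aliceMean (p : Bool → Bool → Fin n → Fin m → ℝ) (x : Fin n) (y : Fin m) : ℝ :=
  ∑ a, sgn a * ∑ b, p a b x y

/-- Bob's mean `⟨B_y⟩` when Alice's input is `x`; no-signaling makes it independent of `x`. -/
def bobMean (p : Bool → Bool → Fin n → Fin m → ℝ) (x : Fin n) (y : Fin m) : ℝ :=
  ∑ b, sgn b * ∑ a, p a b x y

lemma IsNSBox.aliceMean_eq (hp : IsNSBox p) (x : Fin n) (y y' : Fin m) :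
    aliceMean p x y = aliceMean p x y' :=
  sum_congr rfl fun a _ => by rw [hp.2.2.1 a x y y']

lemma IsNSBox.bobMean_eq (hp : IsNSBox p) (x x' : Fin n) (y : Fin m) :
    bobMean p x y = bobMean p x' y :=
  sum_congr rfl fun b _ => by rw [hp.2.2.2 b y x x']

lemma IsNSBox.sign_mul_corr_le (hp : IsNSBox p) {s : ℝ} (hs : s = 1 ∨ s = -1)
    (x : Fin n) (y : Fin m) :
    s * corr p x y ≤ 1 - |aliceMean p x y - s * bobMean p x y| := by
  have hnonneg : ∀ a b, 0 ≤ p a b x y := fun a b => hp.1 a b x y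
  have hsum := hp.2.1 x y
  simp only [Fintype.sum_bool] at hsum
  simp only [corr, aliceMean, bobMean, sgn, Fintype.sum_bool, if_true, Bool.false_eq_true, if_false]
  rw [le_sub_comm, abs_le]
  rcases hs with rfl | rfl <;> constructor <;>
    linarith [hnonneg true true, hnonneg true false, hnonneg false true, hnonneg false false]

lemma DetB1.abs_bobMean [NeZero m] (hdet : DetB1 p) (x : Fin n) : |bobMean p x 0| = 1 := by
  obtain ⟨b₀, hb₀⟩ := hdet
  simp only [bobMean, hb₀]
  cases b₀ <;> simp [sgn]

lemma IsNSBox.sum_mul_corr_le_max [NeZero n] [NeZero m] (hp : IsNSBox p) (hdet : DetB1 p)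
    {c : Fin n → Fin m → ℝ} (hc : ∀ x y, c x y = 1 ∨ c x y = -1) {β : ℝ}
    (hβ : IsLocalBound c β) :
    ∑ x, ∑ y, c x y * corr p x y ≤ max ((n : ℝ) * ((m : ℝ) - 1)) β :=
  calc ∑ x, ∑ y, c x y * corr p x y
      ≤ ∑ x, ∑ y, (1 - |aliceMean p x 0 - c x y * bobMean p 0 y|) :=
        sum_le_sum fun x _ => sum_le_sum fun y _ => by
          rw [hp.aliceMean_eq x 0 y, hp.bobMean_eq 0 x y]
          exact hp.sign_mul_corr_le (hc x y) x y
    _ ≤ max ((n : ℝ) * ((m : ℝ) - 1)) β := by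
        simpa only [Fintype.card_fin] using
          hβ.sum_one_sub_abs_sub_le_max hc (fun x => aliceMean p x 0) (hdet.abs_bobMean 0)

end Box

/-- For a total-function XOR game (all coefficients `c_{x,y} = ±1`), the maximal no-signaling
value with Bob's observable `B₁` deterministic satisfies `β₁^max ≤ max{n(m−1), β_cl^max}`;
consequently, since `β^max = nm`, the relevance of `B₁` satisfies
`w = nm − β₁^max ≥ min(n, nm − β_cl^max)`. -/
theorem xor_game_relevance {n m : ℕ} [NeZero n] [NeZero m]
    (c : Fin n → Fin m → ℝ) (hc : ∀ x y, c x y = 1 ∨ c x y = -1)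
    (βcl : ℝ)
    (hcl : IsGreatest {v : ℝ | ∃ (a : Fin n → ℝ) (b : Fin m → ℝ),
        (∀ x, a x = 1 ∨ a x = -1) ∧ (∀ y, b y = 1 ∨ b y = -1) ∧
        v = ∑ x, ∑ y, c x y * a x * b y} βcl)
    (β1max : ℝ)
    (h1max : IsGreatest {v : ℝ | ∃ p : Bool → Bool → Fin n → Fin m → ℝ,
        IsNSBox p ∧ DetB1 p ∧ v = ∑ x, ∑ y, c x y * corr p x y} β1max) :
    β1max ≤ max ((n : ℝ) * ((m : ℝ) - 1)) βcl ∧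
      (n : ℝ) * (m : ℝ) - β1max ≥ min (n : ℝ) ((n : ℝ) * (m : ℝ) - βcl) := by
  have hlocal : IsLocalBound c βcl := fun a b ha hb => hcl.2 ⟨a, b, ha, hb, rfl⟩
  have hbound : β1max ≤ max ((n : ℝ) * ((m : ℝ) - 1)) βcl := by
    obtain ⟨p, hp, hdet, rfl⟩ := h1max.1
    exact hp.sum_mul_corr_le_max hdet hc hlocal
  refine ⟨hbound, ?_⟩
  calc min (n : ℝ) (n * m - βcl)
      = n * m - max ((n : ℝ) * ((m : ℝ) - 1)) βcl := by
        rw [← min_sub_sub_left]; ring_nf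
    _ ≤ n * m - β1max := sub_le_sub_left hbound _
end
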